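/- Suppose H = V W^H and H^< = V Λ W^H where V ∈ ℂ^{m×p}, W ∈ ℂ^{m×p} both have rank p and Λ ∈ ℂ^{p×p}. Then every eigenvalue of Λ is an eigenvalue of the matrix pencil (H^<, H), i.e. for each eigenvalue λ of Λ there exists a nonzero vector x with H^< x = λ H x. -/

import Mathlib

open Matrix

section Surjectivity

variable {K m n : Type*} [Field K] [Fintype m] [Fintype n]

theorem mulVec_surjective_iff_rank_eq_card {A : Matrix m n K} :
    Function.Surjective A.mulVec ↔ A.rank = Fintype.card m := by
  rw [← A.coe_mulVecLin, ← LinearMap.range_eq_top, Matrix.rank,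
    ← Module.finrank_fintype_fun_eq_card K]
  exact ⟨fun h ↦ by rw [h, finrank_top], Submodule.eq_top_of_finrank_eq⟩

theorem conjTranspose_mulVec_surjective_iff_rank_eq_card [PartialOrder K] [StarRing K]
    [StarOrderedRing K] {A : Matrix m n K} :
    Function.Surjective Aᴴ.mulVec ↔ A.rank = Fintype.card n := by
  rw [mulVec_surjective_iff_rank_eq_card, rank_conjTranspose]

end Surjectivity

/-- The conclusion is `U *ᵥ x ≠ 0` rather than `x ≠ 0` because every vector in the kernel of `U`
solves the pencil equation, whatever `μ` is. -/
theorem pencil_contains_eigenvalues_general {S R l m n : Type*} [NonUnitalSemiring R]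
    [DistribSMul S R] [SMulCommClass S R R] [Fintype m] [Fintype n]
    (V : Matrix l n R) {U : Matrix n m R} (hU : Function.Surjective U.mulVec)
    {Λ : Matrix n n R} {μ : S} (hμ : ∃ y : n → R, y ≠ 0 ∧ Λ *ᵥ y = μ • y) :
    ∃ x : m → R, U *ᵥ x ≠ 0 ∧ (V * Λ * U) *ᵥ x = μ • ((V * U) *ᵥ x) := by
  obtain ⟨y, hy, hΛ⟩ := hμ
  obtain ⟨x, rfl⟩ := hU y
  refine ⟨x, hy, ?_⟩
  calc (V * Λ * U) *ᵥ x = V *ᵥ (Λ *ᵥ (U *ᵥ x)) := by simp only [mulVec_mulVec, Matrix.mul_assoc]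
    _ = V *ᵥ (μ • (U *ᵥ x)) := by rw [hΛ]
    _ = μ • ((V * U) *ᵥ x) := by rw [mulVec_smul, mulVec_mulVec]

theorem pencil_contains_eigenvalues (m p : ℕ) (hp : 0 < p) (hpm : p ≤ m)
    (V W : Matrix (Fin m) (Fin p) ℂ) (hV : V.rank = p) (hW : W.rank = p)
    (Λ : Matrix (Fin p) (Fin p) ℂ) (lam : ℂ)
    (hlam : ∃ y : Fin p → ℂ, y ≠ 0 ∧ Λ *ᵥ y = lam • y) :
    ∃ x : Fin m → ℂ, x ≠ 0 ∧ (V * Λ * Wᴴ) *ᵥ x = lam • ((V * Wᴴ) *ᵥ x) := by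
  have hsurj : Function.Surjective Wᴴ.mulVec := by
    open scoped ComplexOrder in
    exact conjTranspose_mulVec_surjective_iff_rank_eq_card.mpr
      (hW.trans (Fintype.card_fin p).symm)
  obtain ⟨x, hx, hpencil⟩ := pencil_contains_eigenvalues_general V hsurj hlam
  exact ⟨x, fun h ↦ hx (h ▸ mulVec_zero _), hpencil⟩
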